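/- arXiv:2509.14463 — 2 statements merged into one kernel-verified Lean document; each statement's English description precedes it below -/
import Mathlib

section
/- Let n > 1 with n ≡ 1 (mod 4), and let S be an n×n real matrix that is skew-symmetric, has zero diagonal, and has all off-diagonal entries equal to ±1 (the Seidel adjacency matrix of an n-tournament). Then the number of diamonds, i.e., the number of 4-element subsets s of {1,…,n} for which the 4×4 principal submatrix of S indexed by s has determinant 9, is strictly less than n(n−1)(n−3)(n+1)/96. -/
open Matrix

noncomputable section

/-- The number of diamonds of the tournament with Seidel adjacency matrix `S`: the number
of 4-element index subsets whose principal submatrix of `S` has determinant 9. -/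
noncomputable def diamondCount {n : ℕ} (S : Matrix (Fin n) (Fin n) ℝ) : ℕ :=
  Set.ncard {s : Finset (Fin n) | s.card = 4 ∧
    (S.submatrix (fun i : s => (i : Fin n)) (fun j : s => (j : Fin n))).det = 9}

/-!
Every principal `4 × 4` minor of `S` is `1` or `9`, so the sum of these minors counts the diamonds;
as `tr S = 0`, it equals `(tr (S ^ 2) ^ 2 - 2 * tr (S ^ 4)) / 8`. Since `tr (S ^ 2) = -n * (n - 1)`
is fixed, bounding the number of diamonds from above amounts to bounding `tr (S ^ 4)`, the sum of
the squared entries of the Gram matrix `G = S * Sᵀ`, from below. The diagonal entries of `G` are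
`n - 1`, and the off-diagonal ones are odd because `n` is odd. This gives the weak inequality. It is
strict because the off-diagonal entries are not all `±1`: otherwise the congruence
`G i j + G i k + G j k ≡ -1 (mod 4)` forces `G i j = G i k * G j k`, hence
`G = v * vᵀ + (n - 2) • 1` for some sign vector `v`. This matrix is nonsingular, whereas `S` is
skew-symmetric of odd order and therefore singular.
-/

open Finset Fintype Polynomial

variable {ι R : Type*}

section PrincipalMinors

variable [Fintype ι] [DecidableEq ι] [CommRing R]

/-- The sum of the `k × k` principal minors of `M`, i.e. the `k`-th elementary symmetric function
of its eigenvalues. -/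
def sumPrincipalMinors (M : Matrix ι ι R) (k : ℕ) : R :=
  ∑ s ∈ powersetCard k univ, (M.submatrix (Subtype.val : s → ι) Subtype.val).det

theorem coeff_det_one_add_X_smul (M : Matrix ι ι R) (k : ℕ) :
    (1 + (X : R[X]) • M.map C).det.coeff k = sumPrincipalMinors M k :=
  coeff_det_one_add_X_smul_eq_sum_minors M k

theorem sumPrincipalMinors_zero (M : Matrix ι ι R) : sumPrincipalMinors M 0 = 1 := by
  simp [sumPrincipalMinors]

theorem sumPrincipalMinors_one (M : Matrix ι ι R) : sumPrincipalMinors M 1 = M.trace := by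
  rw [← coeff_det_one_add_X_smul, coeff_det_one_add_X_smul_one]

theorem sumPrincipalMinors_neg (M : Matrix ι ι R) (k : ℕ) :
    sumPrincipalMinors (-M) k = (-1) ^ k * sumPrincipalMinors M k := by
  rw [sumPrincipalMinors, sumPrincipalMinors, mul_sum]
  refine sum_congr rfl fun s hs => ?_
  rw [submatrix_neg, Pi.neg_apply, Pi.neg_apply, det_neg, card_coe, (mem_powersetCard.mp hs).2]

theorem det_one_add_X_smul_mul_det_one_add_X_smul_neg (M : Matrix ι ι R) :
    (1 + (X : R[X]) • M.map C).det * (1 + (X : R[X]) • (-M).map C).det =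
      expand R 2 (1 + (X : R[X]) • (-(M * M)).map C).det := by
  rw [← det_mul, AlgHom.map_det]
  congr 1
  have hmap : ((expand R 2 : R[X] →ₐ[R] R[X]).mapMatrix
      (1 + (X : R[X]) • (-(M * M)).map C)) = 1 + (X : R[X]) ^ 2 • (-(M * M)).map C := by
    ext i j
    simp [Matrix.one_apply, apply_ite (expand R 2)]
  rw [hmap, Matrix.map_neg C (map_neg C), Matrix.map_neg C (map_neg C), Matrix.map_mul]
  simp only [mul_add, add_mul, mul_one, one_mul, smul_mul_smul_comm, smul_neg, mul_neg, sq]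
  abel

-- Graeffe's root-squaring identity for the characteristic polynomial.
theorem sum_antidiagonal_sumPrincipalMinors (M : Matrix ι ι R) (k : ℕ) :
    ∑ p ∈ antidiagonal (k * 2), (-1) ^ p.2 * sumPrincipalMinors M p.1 * sumPrincipalMinors M p.2 =
      (-1) ^ k * sumPrincipalMinors (M * M) k := by
  have h := congrArg (coeff · (k * 2)) (det_one_add_X_smul_mul_det_one_add_X_smul_neg M)
  simp only [coeff_mul, coeff_expand_mul two_pos, coeff_det_one_add_X_smul,
    sumPrincipalMinors_neg] at h
  rw [← h]
  exact sum_congr rfl fun p _ => by ring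

theorem two_mul_sumPrincipalMinors_two (M : Matrix ι ι R) :
    2 * sumPrincipalMinors M 2 = M.trace ^ 2 - (M * M).trace := by
  have h := sum_antidiagonal_sumPrincipalMinors M 1
  simp only [Nat.sum_antidiagonal_eq_sum_range_succ_mk, sum_range_succ, sum_range_zero,
    Nat.reduceMul, Nat.reduceSub, sumPrincipalMinors_zero, sumPrincipalMinors_one] at h
  linear_combination h

theorem eight_mul_sumPrincipalMinors_four_of_trace_eq_zero {M : Matrix ι ι R}
    (hM : M.trace = 0) :
    8 * sumPrincipalMinors M 4 = (M * M).trace ^ 2 - 2 * (M * M * (M * M)).trace := by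
  have h := sum_antidiagonal_sumPrincipalMinors M 2
  simp only [Nat.sum_antidiagonal_eq_sum_range_succ_mk, sum_range_succ, sum_range_zero,
    Nat.reduceMul, Nat.reduceSub, sumPrincipalMinors_zero, sumPrincipalMinors_one, hM] at h
  have h₂ := two_mul_sumPrincipalMinors_two M
  rw [hM] at h₂
  linear_combination 4 * h + 2 * two_mul_sumPrincipalMinors_two (M * M) -
    (2 * sumPrincipalMinors M 2 - (M * M).trace) * h₂

end PrincipalMinors

section Determinants

variable [CommRing R]

theorem det_eq_zero_of_transpose_eq_neg_of_odd_card [Fintype ι] [DecidableEq ι]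
    [IsAddTorsionFree R] {M : Matrix ι ι R} (hM : Mᵀ = -M) (hodd : Odd (card ι)) : M.det = 0 := by
  have h : M.det = -M.det := by
    conv_lhs => rw [← det_transpose, hM, det_neg, hodd.neg_one_pow, neg_one_mul]
  exact self_eq_neg.mp h

-- The base of the square is the Pfaffian of `M`.
theorem det_fin_four_eq_sq_of_transpose_eq_neg {M : Matrix (Fin 4) (Fin 4) R} (hM : Mᵀ = -M)
    (hdiag : ∀ i, M i i = 0) :
    M.det = (M 0 1 * M 2 3 - M 0 2 * M 1 3 + M 0 3 * M 1 2) ^ 2 := by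
  have hskew (i j : Fin 4) : M j i = -M i j := congrFun₂ hM i j
  rw [det_succ_row_zero, Fin.sum_univ_four]
  simp only [det_fin_three, submatrix_apply, Fin.succAbove, Fin.reduceSucc, Fin.reduceCastSucc,
    Fin.reduceLT, reduceIte, Fin.isValue, Fin.coe_ofNat_eq_mod, hdiag,
    hskew 0 1, hskew 0 2, hskew 0 3, hskew 1 2, hskew 1 3, hskew 2 3]
  ring

theorem det_vecMulVec_self_add_smul_one_ne_zero [Fintype ι] [DecidableEq ι] [LinearOrder R]
    [IsStrictOrderedRing R] (v : ι → R) {c : R} (hc : 0 < c) :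
    (vecMulVec v v + c • (1 : Matrix ι ι R)).det ≠ 0 := by
  rw [Ne, ← exists_mulVec_eq_zero_iff]
  rintro ⟨x, hx, h⟩
  have hform : (v ⬝ᵥ x) ^ 2 + c * (x ⬝ᵥ x) = 0 := by
    rw [← dotProduct_zero x, ← h, add_mulVec, vecMulVec_mulVec, smul_mulVec, one_mulVec,
      dotProduct_add, dotProduct_smul, dotProduct_smul, dotProduct_comm x v]
    simp [sq]
  have hnonneg : 0 ≤ x ⬝ᵥ x := sum_nonneg fun i _ => mul_self_nonneg (x i)
  have hpos : 0 < x ⬝ᵥ x := hnonneg.lt_of_ne' (mt dotProduct_self_eq_zero.mp hx)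
  nlinarith [sq_nonneg (v ⬝ᵥ x), mul_pos hc hpos]

end Determinants

/-- The Seidel adjacency matrix of a tournament on `ι`: the entry at `(i, j)` is `1` if `i`
dominates `j` and `-1` if `j` dominates `i`. -/
structure IsSeidelTournament [Ring R] (S : Matrix ι ι R) : Prop where
  transpose_eq_neg : Sᵀ = -S
  apply_self (i : ι) : S i i = 0
  apply_of_ne {i j : ι} : i ≠ j → S i j = 1 ∨ S i j = -1

/-- The vertex sets of the diamonds of the tournament with Seidel adjacency matrix `S`: the
`Finset` counted by `diamondCount`, over any index type and any ring. -/
def diamonds [Fintype ι] [DecidableEq ι] [CommRing R] [DecidableEq R] (S : Matrix ι ι R) :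
    Finset (Finset ι) :=
  {s ∈ powersetCard 4 univ | (S.submatrix (Subtype.val : s → ι) Subtype.val).det = 9}

theorem diamondCount_eq_card_diamonds {n : ℕ} (S : Matrix (Fin n) (Fin n) ℝ) :
    diamondCount S = #(diamonds S) := by
  rw [diamondCount, ← Set.ncard_coe_finset]
  congr 1
  ext s
  simp [diamonds]

theorem diamonds_map_intCast [Fintype ι] [DecidableEq ι] [CommRing R] [DecidableEq R] [CharZero R]
    (Z : Matrix ι ι ℤ) : diamonds (Z.map ((↑) : ℤ → R)) = diamonds Z := by
  refine filter_congr fun s _ => ?_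
  rw [submatrix_map, ← Int.cast_det]
  norm_cast

theorem dvd_sum_of_forall_notMem_dvd [Fintype ι] [Semiring R] {s : Finset ι} {f : ι → R} {d : R}
    (hs : d ∣ ∑ i ∈ s, f i) (hf : ∀ i ∉ s, d ∣ f i) : d ∣ ∑ i, f i := by
  classical
  rw [← sum_add_sum_compl s]
  exact dvd_add hs (dvd_sum fun i hi => hf i (mem_compl.mp hi))

theorem trace_mul_self_of_isSymm [Fintype ι] [Semiring R] {G : Matrix ι ι R} (hG : G.IsSymm) :
    (G * G).trace = ∑ i, ∑ j, G i j ^ 2 := by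
  simp only [trace, diag_apply, mul_apply]
  exact sum_congr rfl fun i _ => sum_congr rfl fun j _ => by rw [hG.apply i j, sq]

theorem exists_eq_vecMulVec_self_add_smul_one [DecidableEq ι] [Ring R] {G : Matrix ι ι R} {d : R}
    (hG : G.IsSymm) (hdiag : ∀ i, G i i = d) (hoff : ∀ i j, i ≠ j → G i j ^ 2 = 1)
    (htri : ∀ i j k, i ≠ j → i ≠ k → j ≠ k → G i j = G i k * G j k) :
    ∃ v, G = vecMulVec v v + (d - 1) • (1 : Matrix ι ι R) := by
  obtain _ | ⟨⟨z⟩⟩ := isEmpty_or_nonempty ι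
  · exact ⟨0, Subsingleton.elim _ _⟩
  refine ⟨fun i => if i = z then 1 else G i z, ?_⟩
  ext i j
  obtain rfl | hij := eq_or_ne i j
  · by_cases hi : i = z <;> simp [vecMulVec_apply, hdiag, hi, ← sq, hoff]
  · by_cases hi : i = z
    · subst hi
      simp [vecMulVec_apply, hij, hij.symm, hG.apply]
    · by_cases hj : j = z
      · simp [vecMulVec_apply, hi, hj]
      · simp [vecMulVec_apply, hij, hi, hj, htri i j z hij hi hj]

namespace IsSeidelTournament

section Ring

variable [Ring R] {S : Matrix ι ι R}

theorem apply_swap (hS : IsSeidelTournament S) (i j : ι) : S j i = -S i j :=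
  congrFun₂ hS.transpose_eq_neg i j

theorem submatrix {κ : Type*} (hS : IsSeidelTournament S)
    {f : κ → ι} (hf : Function.Injective f) : IsSeidelTournament (S.submatrix f f) where
  transpose_eq_neg := by rw [transpose_submatrix, hS.transpose_eq_neg, submatrix_neg]; rfl
  apply_self i := hS.apply_self (f i)
  apply_of_ne hij := hS.apply_of_ne (hf.ne hij)

theorem exists_int_map_eq [CharZero R] (hS : IsSeidelTournament S) :
    ∃ Z : Matrix ι ι ℤ, IsSeidelTournament Z ∧ Z.map (↑) = S := by
  have hint (i j : ι) : ∃ z : ℤ, (z : R) = S i j := by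
    obtain rfl | hij := eq_or_ne i j
    · exact ⟨0, by simp [hS.apply_self]⟩
    · obtain h | h := hS.apply_of_ne hij
      · exact ⟨1, by simp [h]⟩
      · exact ⟨-1, by simp [h]⟩
  choose Z hZ using hint
  refine ⟨of Z, ⟨?_, fun i => ?_, fun {i j} hij => ?_⟩, ?_⟩
  · ext i j
    have h := hS.apply_swap i j
    rw [← hZ, ← hZ] at h
    exact_mod_cast h
  · have h := hS.apply_self i
    rw [← hZ] at h
    exact_mod_cast h
  · have h := hS.apply_of_ne hij
    rw [← hZ] at h
    exact_mod_cast h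
  · ext i j
    exact hZ i j

variable [Fintype ι]

theorem mul_self_eq_neg_mul_transpose (hS : IsSeidelTournament S) : S * S = -(S * Sᵀ) := by
  rw [hS.transpose_eq_neg, mul_neg, neg_neg]

theorem trace_eq_zero (hS : IsSeidelTournament S) : S.trace = 0 :=
  sum_eq_zero fun i _ => hS.apply_self i

theorem mul_transpose_apply_self (hS : IsSeidelTournament S) (i : ι) :
    (S * Sᵀ) i i = card ι - 1 := by
  classical
  have hsq (k : ι) : S i k * S i k = 1 - if k = i then 1 else 0 := by
    obtain rfl | hki := eq_or_ne k i
    · simp [hS.apply_self]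
    · obtain h | h := hS.apply_of_ne hki.symm <;> simp [h, hki]
  simp [mul_apply, hsq]

theorem trace_mul_transpose (hS : IsSeidelTournament S) :
    (S * Sᵀ).trace = card ι * (card ι - 1) := by
  simp [trace, hS.mul_transpose_apply_self, mul_sub_one]

end Ring

section CommRing

variable [CommRing R]

theorem det_fin_four_eq_one_or_nine {S : Matrix (Fin 4) (Fin 4) R} (hS : IsSeidelTournament S) :
    S.det = 1 ∨ S.det = 9 := by
  rw [det_fin_four_eq_sq_of_transpose_eq_neg hS.transpose_eq_neg hS.apply_self]
  have hoff (i j : Fin 4) (hij : i ≠ j) := hS.apply_of_ne hij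
  obtain h₁ | h₁ := hoff 0 1 (by decide) <;> obtain h₂ | h₂ := hoff 0 2 (by decide) <;>
    obtain h₃ | h₃ := hoff 0 3 (by decide) <;> obtain h₄ | h₄ := hoff 1 2 (by decide) <;>
    obtain h₅ | h₅ := hoff 1 3 (by decide) <;> obtain h₆ | h₆ := hoff 2 3 (by decide) <;>
    norm_num [h₁, h₂, h₃, h₄, h₅, h₆]

variable {S : Matrix ι ι R}

theorem det_submatrix_eq_one_or_nine [DecidableEq ι] (hS : IsSeidelTournament S)
    {s : Finset ι} (hs : #s = 4) :
    (S.submatrix (Subtype.val : s → ι) Subtype.val).det = 1 ∨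
      (S.submatrix (Subtype.val : s → ι) Subtype.val).det = 9 := by
  rw [← det_submatrix_equiv_self (s.equivFinOfCardEq hs).symm]
  exact ((hS.submatrix Subtype.val_injective).submatrix
    (Equiv.injective _)).det_fin_four_eq_one_or_nine

end CommRing

section Int

variable {S : Matrix ι ι ℤ} [Fintype ι]

theorem sumPrincipalMinors_four [DecidableEq ι] (hS : IsSeidelTournament S) :
    sumPrincipalMinors S 4 = (card ι).choose 4 + 8 * #(diamonds S) := by
  have hminor (s) (hs : s ∈ powersetCard 4 (univ : Finset ι)) :
      (S.submatrix (Subtype.val : s → ι) Subtype.val).det =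
        1 + 8 * if (S.submatrix (Subtype.val : s → ι) Subtype.val).det = 9 then 1 else 0 := by
    obtain h | h := hS.det_submatrix_eq_one_or_nine (mem_powersetCard.mp hs).2 <;> simp [h]
  rw [sumPrincipalMinors, sum_congr rfl hminor, sum_add_distrib, ← mul_sum, sum_boole, diamonds]
  simp

theorem two_dvd_card_add_mul_transpose_apply (hS : IsSeidelTournament S) {i j : ι} (hij : i ≠ j) :
    2 ∣ card ι + (S * Sᵀ) i j := by
  classical
  have hsum : card ι + (S * Sᵀ) i j = ∑ l, (1 + S i l * S j l) := by
    simp [sum_add_distrib, mul_apply]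
  rw [hsum]
  refine dvd_sum_of_forall_notMem_dvd (s := {i, j}) ?_ fun l hl => ?_
  · simp [sum_pair hij, hS.apply_self]
  · simp only [mem_insert, mem_singleton, not_or] at hl
    obtain hi | hi := hS.apply_of_ne (Ne.symm hl.1) <;>
      obtain hj | hj := hS.apply_of_ne (Ne.symm hl.2) <;> simp [hi, hj]

theorem four_dvd_card_add_mul_transpose_apply (hS : IsSeidelTournament S) {i j k : ι}
    (hij : i ≠ j) (hik : i ≠ k) (hjk : j ≠ k) :
    4 ∣ card ι + ((S * Sᵀ) i j + (S * Sᵀ) i k + (S * Sᵀ) j k) := by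
  classical
  have hsum : card ι + ((S * Sᵀ) i j + (S * Sᵀ) i k + (S * Sᵀ) j k) =
      ∑ l, (1 + (S i l * S j l + S i l * S k l + S j l * S k l)) := by
    simp [sum_add_distrib, mul_apply]
  rw [hsum]
  refine dvd_sum_of_forall_notMem_dvd (s := {i, j, k}) ?_ fun l hl => ?_
  · rw [sum_insert (by simp [hij, hik]), sum_pair hjk]
    simp only [hS.apply_self, hS.apply_swap i j, hS.apply_swap i k, hS.apply_swap j k]
    obtain h₁ | h₁ := hS.apply_of_ne hij <;> obtain h₂ | h₂ := hS.apply_of_ne hik <;>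
      obtain h₃ | h₃ := hS.apply_of_ne hjk <;> simp [h₁, h₂, h₃]
  · simp only [mem_insert, mem_singleton, not_or] at hl
    obtain hi | hi := hS.apply_of_ne (Ne.symm hl.1) <;>
      obtain hj | hj := hS.apply_of_ne (Ne.symm hl.2.1) <;>
      obtain hk | hk := hS.apply_of_ne (Ne.symm hl.2.2) <;> simp [hi, hj, hk]

theorem exists_one_lt_mul_transpose_apply_sq (hS : IsSeidelTournament S) (hcard : 1 < card ι)
    (hmod : card ι % 4 = 1) : ∃ i j, i ≠ j ∧ 1 < (S * Sᵀ) i j ^ 2 := by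
  classical
  by_contra! hle
  have hoff (i j : ι) (hij : i ≠ j) : (S * Sᵀ) i j = 1 ∨ (S * Sᵀ) i j = -1 := by
    have hodd := hS.two_dvd_card_add_mul_transpose_apply hij
    have habs := abs_le.mp (sq_le_one_iff_abs_le_one _ |>.mp (hle i j hij))
    omega
  have htri (i j k : ι) (hij : i ≠ j) (hik : i ≠ k) (hjk : j ≠ k) :
      (S * Sᵀ) i j = (S * Sᵀ) i k * (S * Sᵀ) j k := by
    have hdvd := hS.four_dvd_card_add_mul_transpose_apply hij hik hjk
    obtain h₁ | h₁ := hoff i j hij <;> obtain h₂ | h₂ := hoff i k hik <;>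
      obtain h₃ | h₃ := hoff j k hjk <;> rw [h₁, h₂, h₃] at hdvd ⊢ <;> omega
  obtain ⟨v, hv⟩ := exists_eq_vecMulVec_self_add_smul_one (isSymm_mul_transpose_self S)
    hS.mul_transpose_apply_self (fun i j hij => sq_eq_one_iff.mpr (hoff i j hij)) htri
  have hdet : (S * Sᵀ).det = 0 := by
    rw [det_mul, det_eq_zero_of_transpose_eq_neg_of_odd_card hS.transpose_eq_neg
      (Nat.odd_iff.mpr (by omega)), zero_mul]
  rw [hv] at hdet
  exact det_vecMulVec_self_add_smul_one_ne_zero v (by omega) hdet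

theorem lt_trace_mul_transpose_mul_self (hS : IsSeidelTournament S) (hcard : 1 < card ι)
    (hmod : card ι % 4 = 1) :
    card ι ^ 2 * (card ι - 1) < (S * Sᵀ * (S * Sᵀ)).trace := by
  classical
  have hle (i j : ι) :
      (1 + if i = j then ((card ι : ℤ) - 1) ^ 2 - 1 else 0) ≤ (S * Sᵀ) i j ^ 2 := by
    obtain rfl | hij := eq_or_ne i j
    · simp [hS.mul_transpose_apply_self]
    · have hodd := hS.two_dvd_card_add_mul_transpose_apply hij
      have hne : (S * Sᵀ) i j ≠ 0 := by omega
      simpa [hij] using Int.add_one_le_of_lt (sq_pos_of_ne_zero hne)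
  obtain ⟨a, b, hab, hlt⟩ := hS.exists_one_lt_mul_transpose_apply_sq hcard hmod
  calc (card ι : ℤ) ^ 2 * (card ι - 1)
      = ∑ i : ι, ∑ j : ι, (1 + if i = j then ((card ι : ℤ) - 1) ^ 2 - 1 else 0) := by
        simp only [sum_add_distrib, sum_const, card_univ, Int.nsmul_eq_mul, mul_one,
          Finset.sum_ite_eq, mem_univ, if_true]
        ring
    _ < ∑ i, ∑ j, (S * Sᵀ) i j ^ 2 :=
        sum_lt_sum (fun i _ => sum_le_sum fun j _ => hle i j)
          ⟨a, mem_univ a, sum_lt_sum (fun j _ => hle a j) ⟨b, mem_univ b, by simpa [hab] using hlt⟩⟩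
    _ = (S * Sᵀ * (S * Sᵀ)).trace :=
        (trace_mul_self_of_isSymm (isSymm_mul_transpose_self S)).symm

end Int

end IsSeidelTournament

theorem twenty_four_mul_choose_four [CommRing R] (n : ℕ) :
    (24 : R) * n.choose 4 = n * (n - 1) * (n - 2) * (n - 3) := by
  have h := descPochhammer_eval_eq_descFactorial R n 4
  simp only [Nat.descFactorial_eq_factorial_mul_choose, descPochhammer_succ_eval,
    descPochhammer_zero, eval_one, Nat.factorial] at h
  push_cast at h
  linear_combination -h

theorem diamond_count_lt_of_one_mod_four_general [Fintype ι] [DecidableEq ι] [CommRing R]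
    [DecidableEq R] [CharZero R] {S : Matrix ι ι R} (hS : IsSeidelTournament S)
    (hcard : 1 < card ι) (hmod : card ι % 4 = 1) :
    96 * (#(diamonds S) : ℤ) < card ι * (card ι - 1) * (card ι - 3) * (card ι + 1) := by
  obtain ⟨Z, hZ, rfl⟩ := hS.exists_int_map_eq
  rw [diamonds_map_intCast]
  have hminors := eight_mul_sumPrincipalMinors_four_of_trace_eq_zero hZ.trace_eq_zero
  rw [hZ.sumPrincipalMinors_four, hZ.mul_self_eq_neg_mul_transpose, neg_mul_neg, trace_neg, neg_sq,
    hZ.trace_mul_transpose] at hminors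
  have htrace := hZ.lt_trace_mul_transpose_mul_self hcard hmod
  have hchoose := twenty_four_mul_choose_four (R := ℤ) (card ι)
  linarith

/-- a tournament on `n ≡ 1 (mod 4)` vertices (`n > 1`) has strictly fewer
than `n(n-1)(n-3)(n+1)/96` diamonds. -/
theorem diamond_count_lt_of_one_mod_four (n : ℕ) (hn : 1 < n) (hmod : n % 4 = 1)
    (S : Matrix (Fin n) (Fin n) ℝ)
    (hskew : Sᵀ = -S) (hdiag : ∀ i, S i i = 0)
    (hoff : ∀ i j, i ≠ j → S i j = 1 ∨ S i j = -1) :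
    (diamondCount S : ℝ) <
      (n : ℝ) * ((n : ℝ) - 1) * ((n : ℝ) - 3) * ((n : ℝ) + 1) / 96 := by
  have h := diamond_count_lt_of_one_mod_four_general ⟨hskew, hdiag, hoff _ _⟩
    (by simpa using hn) (by simpa using hmod)
  rw [Fintype.card_fin, ← diamondCount_eq_card_diamonds] at h
  rw [lt_div_iff₀' (by norm_num)]
  exact_mod_cast h

end
end

section
/- Let n ≥ 4 and let G be an n×n real matrix with zero diagonal, all off-diagonal entries equal to ±1, Gᵀ = −G, G³ = −nG, and rank G = n − 1 (for example, the Gram matrix of a d×(d+1) equiangular tight frame in ℝ_S^d scaled so that its off-diagonal entries are ±1, with n = d+1). Then the number of 4-element subsets s of {1,…,n} for which the 4×4 principal submatrix of G indexed by s has determinant 9 equals n(n−1)(n−3)(n+1)/96. -/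
open Matrix

noncomputable section

/-!
Since `det (1 - X • G) * det (1 + X • G) = det (1 - X ^ 2 • G ^ 2)`, comparing coefficients for a
traceless `G` expresses the sum of the `4 × 4` principal minors of `G` through the traces of `G ^ 2`
and `G ^ 4`. For the Seidel matrix of a tournament each of these minors is the square of a Pfaffian,
a sum of three signs, hence `1` or `9`, so their sum is `n.choose 4` plus eight times the number of
diamonds. Finally `G ^ 2` has diagonal entries `1 - n`, and `G ^ 3 = -a • G` reduces `G ^ 4` to it.
-/

/-- `G` is the Seidel adjacency matrix of a tournament: `G i j = 1` if `i` dominates `j`, and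
`G i j = -1` if `j` dominates `i`. -/
structure IsTournamentSeidel {ι R : Type*} [CommRing R] (G : Matrix ι ι R) : Prop where
  diag_eq_zero : ∀ i, G i i = 0
  eq_one_or_eq_neg_one : ∀ i j, i ≠ j → G i j = 1 ∨ G i j = -1
  transpose_eq_neg : Gᵀ = -G

section CharpolyRev

open Polynomial

variable {ι R : Type*} [Fintype ι] [DecidableEq ι] [CommRing R] (M : Matrix ι ι R)

lemma charpolyRev_smul (c : R) : (c • M).charpolyRev = M.charpolyRev.comp (C c * X) := by
  simp_rw [charpolyRev, ← coe_compRingHom_apply, RingHom.map_det]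
  congr 1
  ext i j : 1
  by_cases h : i = j <;> simp [one_apply, h] <;> ring

lemma coeff_charpolyRev_neg (k : ℕ) :
    (-M).charpolyRev.coeff k = (-1) ^ k * M.charpolyRev.coeff k := by
  rw [← neg_one_smul R M, charpolyRev_smul, comp_C_mul_X_coeff, mul_comm]

lemma charpolyRev_neg : (-M).charpolyRev = (1 + (X : R[X]) • M.map C).det := by
  rw [charpolyRev, Matrix.map_neg _ (map_neg _), smul_neg, sub_neg_eq_add]

lemma coeff_charpolyRev_eq_sum_minors (k : ℕ) :
    M.charpolyRev.coeff k = (-1) ^ k * ∑ s ∈ Finset.univ.powersetCard k,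
      (M.submatrix (Subtype.val : s → ι) (Subtype.val : s → ι)).det := by
  rw [← coeff_det_one_add_X_smul_eq_sum_minors, ← charpolyRev_neg, ← coeff_charpolyRev_neg, neg_neg]

lemma coeff_zero_charpolyRev : M.charpolyRev.coeff 0 = 1 := by
  rw [coeff_zero_eq_eval_zero, eval_charpolyRev]

lemma charpolyRev_mul_charpolyRev_neg :
    M.charpolyRev * (-M).charpolyRev = expand R 2 (M ^ 2).charpolyRev := by
  have hfactor : (1 - (X : R[X]) • M.map C) * (1 + (X : R[X]) • M.map C) =
      1 - (X ^ 2 : R[X]) • (M ^ 2).map C := by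
    rw [pow_two M, Matrix.map_mul, pow_two, ← smul_mul_smul_comm]
    generalize (X : R[X]) • M.map C = A
    noncomm_ring
  have hexpand : 1 - (X ^ 2 : R[X]) • (M ^ 2).map C =
      (expand R 2).mapMatrix (1 - (X : R[X]) • (M ^ 2).map C) := by
    ext i j : 1
    by_cases h : i = j <;> simp [one_apply, h]
  rw [charpolyRev_neg, charpolyRev, ← det_mul, hfactor, hexpand, ← AlgHom.map_det, charpolyRev]

lemma two_mul_coeff_two_charpolyRev :
    2 * M.charpolyRev.coeff 2 = M.trace ^ 2 - (M ^ 2).trace := by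
  have hcoeff : 2 * M.charpolyRev.coeff 2 - M.trace ^ 2 = -(M ^ 2).trace := calc
    _ = (M.charpolyRev * (-M).charpolyRev).coeff (1 * 2) := by
      simp only [coeff_mul, Finset.Nat.sum_antidiagonal_eq_sum_range_succ_mk, Finset.sum_range_succ,
        Finset.sum_range_zero, one_mul, Nat.reduceSub, coeff_charpolyRev_neg,
        coeff_zero_charpolyRev, coeff_charpolyRev_eq_neg_trace]
      ring
    _ = -(M ^ 2).trace := by
      rw [charpolyRev_mul_charpolyRev_neg, coeff_expand_mul two_pos, coeff_charpolyRev_eq_neg_trace]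
  linear_combination hcoeff

lemma two_mul_coeff_four_charpolyRev_of_trace_eq_zero (htrace : M.trace = 0) :
    2 * M.charpolyRev.coeff 4 = (M ^ 2).charpolyRev.coeff 2 - M.charpolyRev.coeff 2 ^ 2 := by
  have hcoeff : 2 * M.charpolyRev.coeff 4 + M.charpolyRev.coeff 2 ^ 2 =
      (M ^ 2).charpolyRev.coeff 2 := calc
    _ = (M.charpolyRev * (-M).charpolyRev).coeff (2 * 2) := by
      simp only [coeff_mul, Finset.Nat.sum_antidiagonal_eq_sum_range_succ_mk, Finset.sum_range_succ,
        Finset.sum_range_zero, Nat.reduceMul, Nat.reduceSub, coeff_charpolyRev_neg,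
        coeff_zero_charpolyRev, coeff_charpolyRev_eq_neg_trace, htrace]
      ring
    _ = (M ^ 2).charpolyRev.coeff 2 := by
      rw [charpolyRev_mul_charpolyRev_neg, coeff_expand_mul two_pos]
  linear_combination hcoeff

lemma eight_mul_coeff_four_charpolyRev_of_trace_eq_zero (htrace : M.trace = 0) :
    8 * M.charpolyRev.coeff 4 = (M ^ 2).trace ^ 2 - 2 * (M ^ 4).trace := by
  have h₂ := two_mul_coeff_two_charpolyRev M
  have h₂sq := two_mul_coeff_two_charpolyRev (M ^ 2)
  have h₄ := two_mul_coeff_four_charpolyRev_of_trace_eq_zero M htrace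
  rw [← pow_mul] at h₂sq
  rw [htrace] at h₂
  linear_combination 4 * h₄ + 2 * h₂sq - (2 * M.charpolyRev.coeff 2 - (M ^ 2).trace) * h₂

end CharpolyRev

lemma natCast_choose_four {K : Type*} [Field K] [CharZero K] (n : ℕ) :
    (n.choose 4 : K) = n * (n - 1) * (n - 2) * (n - 3) / 24 := by
  rw [Nat.cast_choose_eq_descPochhammer_div]
  simp [descPochhammer_succ_right, Nat.factorial]

lemma det_fin_four_eq_pfaffian_sq_of_alternating {R : Type*} [CommRing R]
    {M : Matrix (Fin 4) (Fin 4) R} (hdiag : ∀ i, M i i = 0) (hskew : Mᵀ = -M) :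
    M.det = (M 0 1 * M 2 3 - M 0 2 * M 1 3 + M 0 3 * M 1 2) ^ 2 := by
  have hswap (i j) : M i j = -M j i := congrFun₂ hskew j i
  rw [det_succ_row_zero, Fin.sum_univ_four]
  simp only [det_fin_three, submatrix_apply, Fin.isValue, Fin.coe_ofNat_eq_mod,
    Fin.succAbove, Fin.reduceSucc, Fin.reduceCastSucc, Fin.reduceLT, ↓reduceIte, hdiag, hswap 1 0,
    hswap 2 0, hswap 3 0, hswap 2 1, hswap 3 1, hswap 3 2]
  ring

namespace IsTournamentSeidel

section CommRing

variable {ι κ R : Type*} [CommRing R] {G : Matrix ι ι R}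

lemma submatrix (hG : IsTournamentSeidel G) {f : κ → ι} (hf : Function.Injective f) :
    IsTournamentSeidel (G.submatrix f f) where
  diag_eq_zero i := hG.diag_eq_zero (f i)
  eq_one_or_eq_neg_one i j hij := hG.eq_one_or_eq_neg_one (f i) (f j) (hf.ne hij)
  transpose_eq_neg := by
    rw [transpose_submatrix, hG.transpose_eq_neg]
    rfl

lemma det_fin_four_eq_one_or_eq_nine {G : Matrix (Fin 4) (Fin 4) R} (hG : IsTournamentSeidel G) :
    G.det = 1 ∨ G.det = 9 := by
  have hmatching (i j k l) (hij : i ≠ j) (hkl : k ≠ l) :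
      G i j * G k l = 1 ∨ G i j * G k l = -1 := by
    rcases hG.eq_one_or_eq_neg_one i j hij with h | h <;>
    rcases hG.eq_one_or_eq_neg_one k l hkl with h' | h' <;>
    simp [h, h']
  rw [det_fin_four_eq_pfaffian_sq_of_alternating hG.diag_eq_zero hG.transpose_eq_neg]
  rcases hmatching 0 1 2 3 (by decide) (by decide) with h₁ | h₁ <;>
  rcases hmatching 0 2 1 3 (by decide) (by decide) with h₂ | h₂ <;>
  rcases hmatching 0 3 1 2 (by decide) (by decide) with h₃ | h₃ <;>
  norm_num [h₁, h₂, h₃]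

variable [Fintype ι] [DecidableEq ι]

lemma det_eq_one_or_eq_nine (hG : IsTournamentSeidel G) (hcard : Fintype.card ι = 4) :
    G.det = 1 ∨ G.det = 9 := by
  let e : Fin 4 ≃ ι := (Fintype.equivFinOfCardEq hcard).symm
  rw [← det_submatrix_equiv_self e]
  exact (hG.submatrix e.injective).det_fin_four_eq_one_or_eq_nine

lemma trace_sq (hG : IsTournamentSeidel G) :
    (G ^ 2).trace = -(Fintype.card ι * (Fintype.card ι - 1)) := by
  have hentry (i j) : G i j * G j i = (if i = j then 1 else 0) - 1 := by
    have hswap : G j i = -G i j := congrFun₂ hG.transpose_eq_neg i j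
    rcases eq_or_ne i j with rfl | hij
    · simp [hG.diag_eq_zero]
    · rcases hG.eq_one_or_eq_neg_one i j hij with h | h <;> simp [hswap, h, hij]
  simp only [trace, pow_two, diag_apply, mul_apply, hentry, Finset.sum_sub_distrib,
    Finset.sum_ite_eq, Finset.mem_univ, ↓reduceIte, Finset.sum_const, Finset.card_univ,
    nsmul_eq_mul, mul_one]
  ring

end CommRing

variable {n : ℕ} {G : Matrix (Fin n) (Fin n) ℝ}

lemma coeff_four_charpolyRev (hG : IsTournamentSeidel G) :
    G.charpolyRev.coeff 4 = n.choose 4 + 8 * diamondCount G := by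
  let minor (s : Finset (Fin n)) : ℝ :=
    (G.submatrix (Subtype.val : s → Fin n) (Subtype.val : s → Fin n)).det
  have hminor (s) (hs : s ∈ Finset.univ.powersetCard 4) :
      minor s = 1 + 8 * if minor s = 9 then 1 else 0 := by
    have hcard : Fintype.card s = 4 := by simpa using hs
    rcases (hG.submatrix Subtype.val_injective).det_eq_one_or_eq_nine hcard with h | h <;>
    norm_num [minor, h]
  have hcount : diamondCount G = ((Finset.univ.powersetCard 4).filter (minor · = 9)).card := by
    rw [diamondCount, ← Set.ncard_coe_finset]
    simp [minor]
  calc G.charpolyRev.coeff 4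
    _ = ∑ s ∈ Finset.univ.powersetCard 4, minor s := by
      rw [coeff_charpolyRev_eq_sum_minors, Even.neg_one_pow (by decide), one_mul]
    _ = n.choose 4 + 8 * diamondCount G := by
      rw [Finset.sum_congr rfl hminor, Finset.sum_add_distrib, ← Finset.mul_sum, Finset.sum_boole,
        hcount]
      simp

lemma diamondCount_eq_trace_pow_four (hG : IsTournamentSeidel G) :
    (diamondCount G : ℝ) = (n * (n - 1) * (n ^ 2 + n - 3) - 3 * (G ^ 4).trace) / 96 := by
  have htrace : G.trace = 0 := by simp [trace, hG.diag_eq_zero]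
  have h := eight_mul_coeff_four_charpolyRev_of_trace_eq_zero G htrace
  rw [hG.coeff_four_charpolyRev, hG.trace_sq, natCast_choose_four, Fintype.card_fin] at h
  linear_combination h / 64

end IsTournamentSeidel

theorem diamond_count_of_etf_gram_general (n : ℕ) (G : Matrix (Fin n) (Fin n) ℝ)
    (hG : IsTournamentSeidel G) (a : ℝ) (hcube : G * G * G = -a • G) :
    (diamondCount G : ℝ) = n * (n - 1) * (n ^ 2 + n - 3 - 3 * a) / 96 := by
  have htrace : (G ^ 4).trace = a * (n * (n - 1)) := by
    rw [pow_succ, pow_three', hcube, smul_mul_assoc, ← pow_two, trace_smul, hG.trace_sq,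
      Fintype.card_fin, smul_eq_mul, neg_mul_neg]
  rw [hG.diamondCount_eq_trace_pow_four, htrace]
  ring

/-- if `G` is an `n × n` Seidel adjacency matrix (zero diagonal, `±1`
off-diagonal entries, skew-symmetric) with `G³ = -nG` and `rank G = n - 1` (as for the
scaled Gram matrix of a `d × (d+1)` ETF in `ℝ_S^d`, `n = d + 1`), then the number of
diamonds equals `n(n-1)(n-3)(n+1)/96`. -/
theorem diamond_count_of_etf_gram (n : ℕ) (hn : 4 ≤ n)
    (G : Matrix (Fin n) (Fin n) ℝ)
    (hdiag : ∀ i, G i i = 0)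
    (hoff : ∀ i j, i ≠ j → G i j = 1 ∨ G i j = -1)
    (hskew : Gᵀ = -G)
    (hcube : G * G * G = (-(n : ℝ)) • G)
    (hrank : G.rank = n - 1) :
    (diamondCount G : ℝ) =
      (n : ℝ) * ((n : ℝ) - 1) * ((n : ℝ) - 3) * ((n : ℝ) + 1) / 96 := by
  rw [diamond_count_of_etf_gram_general n G ⟨hdiag, hoff, hskew⟩ n hcube]
  ring

end
end
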